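/- arXiv:2112.01647 — 2 statements merged into one kernel-verified Lean document; each statement's English description precedes it below -/
import Mathlib

section
/- Let G be a d-regular graph with adjacency matrix A and non-backtracking matrix B, let β ∈ ℂ be nonzero, and let f : V(G) → ℂ satisfy A f = (β + (d−1)/β) f. Define g on directed edges by g(u,v) = f(u) − β·f(v). Then B g = β g. -/
open scoped Classical

noncomputable section

/-- The directed edges of `G`. -/
def DEdge {V : Type*} (G : SimpleGraph V) : Type _ :=
  {p : V × V // G.Adj p.1 p.2}

instance {V : Type*} [Fintype V] (G : SimpleGraph V) : Fintype (DEdge G) :=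
  Subtype.fintype _

/-- The non-backtracking matrix of `G`: entry at `((u,v),(x,y))` is `1` if `v = x` and
`u ≠ y`, and `0` otherwise. -/
def nbMatrix {V : Type*} (G : SimpleGraph V) : Matrix (DEdge G) (DEdge G) ℂ :=
  fun p q => if p.val.2 = q.val.1 ∧ p.val.1 ≠ q.val.2 then 1 else 0

/-- If `A f = (β + (d-1)/β) f` then `g(u,v) = f(u) - β f(v)` is an eigenvector of the
non-backtracking matrix with eigenvalue `β`. -/
theorem stmt14 {V : Type*} [Fintype V] [DecidableEq V] {d : ℕ}
    (G : SimpleGraph V) (hreg : G.IsRegularOfDegree d)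
    (β : ℂ) (hβ : β ≠ 0) (f : V → ℂ)
    (hf : (G.adjMatrix ℂ).mulVec f = (β + ((d : ℂ) - 1) / β) • f) :
    (nbMatrix G).mulVec (fun p : DEdge G => f p.val.1 - β * f p.val.2)
      = β • (fun p : DEdge G => f p.val.1 - β * f p.val.2) := by
  funext p
  obtain ⟨⟨u, v⟩, huv⟩ := p
  have huv' : G.Adj u v := huv
  have hA : ∑ y ∈ G.neighborFinset v, f y = (β + ((d : ℂ) - 1) / β) * f v := by
    have h := congrFun hf v
    rw [SimpleGraph.adjMatrix_mulVec_apply] at h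
    simpa using h
  have hcard : ((G.neighborFinset v).card : ℂ) = d := by
    have h := hreg v
    rw [← SimpleGraph.card_neighborFinset_eq_degree] at h
    exact_mod_cast h
  have hu : u ∈ G.neighborFinset v := by simpa using huv'.symm
  have hS : (nbMatrix G).mulVec (fun p : DEdge G => f p.val.1 - β * f p.val.2) ⟨(u, v), huv⟩
      = ∑ y ∈ (G.neighborFinset v).erase u, (f v - β * f y) := by
    simp only [Matrix.mulVec, dotProduct, nbMatrix, ite_mul, one_mul, zero_mul]
    rw [← Finset.sum_filter]
    refine Finset.sum_bij (fun q _ => q.val.2) ?_ ?_ ?_ ?_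
    · rintro ⟨⟨x, y⟩, hxy⟩ h
      have h3 : v = x ∧ u ≠ y := (Finset.mem_filter.mp h).2
      obtain ⟨rfl, h2⟩ := h3
      exact Finset.mem_erase.mpr ⟨fun h => h2 h.symm, (G.mem_neighborFinset _ _).mpr hxy⟩
    · rintro ⟨⟨x, y⟩, hxy⟩ h ⟨⟨x', y'⟩, hxy'⟩ h' e
      replace h := (Finset.mem_filter.mp h).2
      replace h' := (Finset.mem_filter.mp h').2
      apply Subtype.ext
      exact Prod.ext (h.1.symm.trans h'.1) e
    · intro y hy
      simp only [Finset.mem_erase, SimpleGraph.mem_neighborFinset] at hy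
      refine ⟨⟨(v, y), hy.2⟩, ?_, rfl⟩
      exact Finset.mem_filter.mpr ⟨Finset.mem_univ _, rfl, fun h => hy.1 h.symm⟩
    · rintro ⟨⟨x, y⟩, hxy⟩ h
      replace h := (Finset.mem_filter.mp h).2
      have h3 : v = x := h.1
      subst h3
      rfl
  rw [hS]
  have h1 := Finset.add_sum_erase (G.neighborFinset v) (fun y => f v - β * f y) hu
  simp only [Finset.sum_sub_distrib, ← Finset.mul_sum, hA, Finset.sum_const, nsmul_eq_mul,
    hcard] at h1
  rw [Finset.sum_sub_distrib, ← Finset.mul_sum, Finset.sum_const, nsmul_eq_mul]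
  change _ = β * (f u - β * f v)
  have h2 : β * ((β + ((d : ℂ) - 1) / β) * f v) = (β * β + (d - 1)) * f v := by
    field_simp
  linear_combination h1 - h2
end
end

section
/- Let G be a d-regular graph, H a finite abelian group, s a signing of the (oriented) edges of G by elements of H extended to directed edges by s(v,u) = s(u,v)^{−1}, and χ a character of H. Let A be the χ-signed adjacency matrix of G, defined by A(u,v) = χ(s(u,v)) if u and v are adjacent and 0 otherwise, and let B = B_s(χ) be the signed non-backtracking matrix. Let β ∈ ℂ be nonzero and let f : V(G) → ℂ satisfy A f = (β + (d−1)/β) f. Define g on directed edges by g(u,v) = A(u,v)^{−1}·(f(u) − β·A(u,v)·f(v)). Then B g = β g. -/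
open scoped Classical

noncomputable section

instance {V : Type*} (G : SimpleGraph V) : DecidableEq (DEdge G) :=
  Classical.decEq _

/-- The `χ`-signed adjacency matrix of `G`: `A(u,v) = χ(s(u,v))` for adjacent `u, v` and
`0` otherwise. -/
def sAdjMatrix {V : Type*} {H : Type*} [Group H] (G : SimpleGraph V) (s : V → V → H)
    (χ : H →* ℂ) : Matrix V V ℂ :=
  fun u v => if G.Adj u v then χ (s u v) else 0

/-- The signed non-backtracking matrix `B_s(χ)` of `G`: entry at `((u,v),(x,y))` is
`χ(s(x,y))` if `v = x` and `u ≠ y`, and `0` otherwise. -/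
def sNbMatrix {V : Type*} {H : Type*} [Group H] (G : SimpleGraph V) (s : V → V → H)
    (χ : H →* ℂ) : Matrix (DEdge G) (DEdge G) ℂ :=
  fun p q => if p.val.2 = q.val.1 ∧ p.val.1 ≠ q.val.2 then χ (s q.val.1 q.val.2) else 0

/-- Signed version: if `A f = (β + (d-1)/β) f` for the `χ`-signed adjacency matrix, then
`g(u,v) = A(u,v)⁻¹ (f(u) - β A(u,v) f(v))` is an eigenvector of `B_s(χ)` with
eigenvalue `β`. -/
theorem stmt15 {V : Type*} [Fintype V] [DecidableEq V] {d : ℕ}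
    (G : SimpleGraph V) (hreg : G.IsRegularOfDegree d)
    {H : Type*} [CommGroup H] [Fintype H]
    (s : V → V → H) (hs : ∀ u v, G.Adj u v → s v u = (s u v)⁻¹)
    (χ : H →* ℂ) (β : ℂ) (hβ : β ≠ 0) (f : V → ℂ)
    (hf : (sAdjMatrix G s χ).mulVec f = (β + ((d : ℂ) - 1) / β) • f) :
    (sNbMatrix G s χ).mulVec
        (fun p : DEdge G => (χ (s p.val.1 p.val.2))⁻¹ *
          (f p.val.1 - β * (χ (s p.val.1 p.val.2) * f p.val.2)))
      = β • (fun p : DEdge G => (χ (s p.val.1 p.val.2))⁻¹ *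
          (f p.val.1 - β * (χ (s p.val.1 p.val.2) * f p.val.2))) := by
  have hne : ∀ h : H, χ h ≠ 0 := fun h hh => by
    have h1 : χ (h * h⁻¹) = 1 := by simp
    rw [map_mul, hh, zero_mul] at h1
    exact zero_ne_one h1
  funext p
  obtain ⟨⟨u, v⟩, huv⟩ := p
  have huv' : G.Adj u v := huv
  have hv := congrFun hf v
  simp only [Matrix.mulVec, dotProduct, sAdjMatrix, Pi.smul_apply, smul_eq_mul] at hv
  have hdeg : (∑ y : V, if G.Adj v y then (1 : ℂ) else 0) = d := by
    rw [← hreg v, ← SimpleGraph.card_neighborFinset_eq_degree,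
      SimpleGraph.neighborFinset_eq_filter]
    simp
  have key : ∀ F : V × V → ℂ, (∑ q : DEdge G, F q.val)
      = ∑ x : V, ∑ y : V, if G.Adj x y then F (x, y) else 0 := by
    intro F
    rw [← Fintype.sum_prod_type' (f := fun x y => if G.Adj x y then F (x, y) else 0),
      ← Finset.sum_filter]
    exact (Finset.sum_subtype _ (by simp) F).symm
  have hL : (∑ q : DEdge G, (if v = q.val.1 ∧ u ≠ q.val.2 then χ (s q.val.1 q.val.2) else 0) *
      ((χ (s q.val.1 q.val.2))⁻¹ *
          (f q.val.1 - β * (χ (s q.val.1 q.val.2) * f q.val.2))))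
      = ∑ y : V, ((if G.Adj v y then (1 : ℂ) else 0) * f v
          - β * ((if G.Adj v y then χ (s v y) else 0) * f y)
          - if u = y then f v - β * (χ (s v u) * f u) else 0) := by
    rw [key (fun q => (if v = q.1 ∧ u ≠ q.2 then χ (s q.1 q.2) else 0) *
      ((χ (s q.1 q.2))⁻¹ * (f q.1 - β * (χ (s q.1 q.2) * f q.2))))]
    rw [Finset.sum_eq_single v]
    · refine Finset.sum_congr rfl fun y _ => ?_
      have := hne (s v y)
      by_cases hy : u = y
      · subst hy
        simp [huv'.symm]
      · by_cases ha : G.Adj v y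
        · simp [hy, ha]
          field_simp
        · simp [hy, ha]
    · intro x _ hx
      simp [Ne.symm hx]
    · simp
  have hinv : χ (s v u) = (χ (s u v))⁻¹ := by
    rw [hs u v huv']
    refine eq_inv_of_mul_eq_one_left ?_
    rw [← map_mul]; simp
  simp only [Matrix.mulVec, dotProduct, sNbMatrix]
  refine Eq.trans (Eq.trans ?_ hL) ?_
  · refine Finset.sum_congr rfl fun q _ => ?_
    congr
  change _ = β * ((χ (s u v))⁻¹ * (f u - β * (χ (s u v) * f v)))
  rw [Finset.sum_sub_distrib, Finset.sum_sub_distrib, ← Finset.sum_mul, ← Finset.mul_sum,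
    hv, hdeg, Finset.sum_ite_eq]
  simp only [Finset.mem_univ, if_true, hinv]
  have := hne (s u v)
  field_simp
  ring
end
end
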